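/- arXiv:2505.18287 — 2 statements merged into one kernel-verified Lean document; each statement's English description precedes it below -/
import Mathlib

section
/- (Lemma: for each instance there is a division whose space contains an optimal committee series.) Let m, k, f, τ be natural numbers with k ≥ 1, f ≥ 1, τ ≥ 1, let β : Finset (Fin m) → ℕ be a committee scoring function, and let W : Fin τ → Finset (Fin m) be any consecutive f-frequency committee series of length τ with committee size k. Then there exist a size d ≥ 1, a division (ρ, 𝒮, ℱ) of size d for committee size k, and multiplicities r, u : Fin d → ℕ with r i ≥ 1 for all i, u i = 0 whenever ℱ i = ∅, and ∑ i, (r i + u i) = τ, such that the induced series W' of (ρ, 𝒮, ℱ, r, u) is itself a consecutive f-frequency committee series of length τ with committee size k and has utilitarian quality ∑ i, β (W' i) ≥ ∑ i, β (W i). In particular, some division's space contains a committee series maximizing the utilitarian quality among all consecutive f-frequency series of length τ with committee size k. -/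
/-- A committee series `W` of length `τ` over candidates `Fin m` is a consecutive
`f`-frequency series if every candidate belongs to at most `f` committees and the
set of indices of committees containing the candidate is consecutive. -/
def ConsecutiveFrequency {m τ : ℕ} (f : ℕ) (W : Fin τ → Finset (Fin m)) : Prop :=
  ∀ c : Fin m,
    (Finset.univ.filter (fun i => c ∈ W i)).card ≤ f ∧
    ∀ a b x : Fin τ, c ∈ W a → c ∈ W b → a ≤ x → x ≤ b → c ∈ W x

/-- `X` is an interval with respect to the order `ρ` (where `ρ j` is the candidate in
position `j`): the set of positions of members of `X` is consecutive. -/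
def IsRhoInterval {m : ℕ} (ρ : Equiv.Perm (Fin m)) (X : Finset (Fin m)) : Prop :=
  ∀ a b x : Fin m, ρ a ∈ X → ρ b ∈ X → a ≤ x → x ≤ b → ρ x ∈ X

/-- The position (with respect to `ρ`) of the leftmost candidate of `X`. -/
noncomputable def begOf {m : ℕ} (ρ : Equiv.Perm (Fin m)) (X : Finset (Fin m)) : ℕ :=
  sInf {j : ℕ | ∃ h : j < m, ρ ⟨j, h⟩ ∈ X}

/-- A division of size `d` for committee size `k`: an order `ρ` of the candidates,
primitives `S` and interim candidate sets `F` satisfying conditions (a)–(g). -/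
def IsDivision {m : ℕ} (k d : ℕ) (ρ : Equiv.Perm (Fin m))
    (S F : Fin d → Finset (Fin m)) : Prop :=
  (∀ i, (S i).card = k ∧ IsRhoInterval ρ (S i)) ∧
  (∀ i : Fin d, ∀ h : (i : ℕ) + 1 < d, begOf ρ (S i) < begOf ρ (S ⟨(i : ℕ) + 1, h⟩)) ∧
  (∀ i : Fin d, (i : ℕ) = d - 1 → F i = ∅) ∧
  (∀ i j : Fin d, i ≠ j → F i ∩ F j = ∅) ∧
  (∀ i : Fin d, ∀ h : (i : ℕ) + 1 < d,
      (F i).card = 0 ∨ (F i).card = k - (S i ∩ S ⟨(i : ℕ) + 1, h⟩).card) ∧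
  (∀ i : Fin d, ∀ h : (i : ℕ) + 1 < d, S i ∩ S ⟨(i : ℕ) + 1, h⟩ = ∅ → F i = ∅) ∧
  (∀ i j : Fin d, F i ∩ S j = ∅)

/-- The successor primitive of `S i` (or `∅` if `i` is the last index). -/
def nextS {m d : ℕ} (S : Fin d → Finset (Fin m)) (i : Fin d) : Finset (Fin m) :=
  if h : (i : ℕ) + 1 < d then S ⟨(i : ℕ) + 1, h⟩ else ∅

/-- `W` is the series induced by the division data `(S, F)` with multiplicities `(r, u)`:
it is the concatenation, for `j = 0, …, d-1` in order, of `r j` copies of the primitive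
`S j` followed by `u j` copies of the intermediate committee `(S j ∩ S (j+1)) ∪ F j`. -/
def InducedSeries {m d τ : ℕ} (S F : Fin d → Finset (Fin m)) (r u : Fin d → ℕ)
    (W : Fin τ → Finset (Fin m)) : Prop :=
  ∀ (t : Fin τ) (j : Fin d),
    ((∑ i ∈ Finset.univ.filter (fun i => i < j), (r i + u i)) ≤ (t : ℕ) ∧
        (t : ℕ) < (∑ i ∈ Finset.univ.filter (fun i => i < j), (r i + u i)) + r j →
      W t = S j) ∧
    ((∑ i ∈ Finset.univ.filter (fun i => i < j), (r i + u i)) + r j ≤ (t : ℕ) ∧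
        (t : ℕ) < (∑ i ∈ Finset.univ.filter (fun i => i < j), (r i + u i)) + r j + u j →
      W t = (S j ∩ nextS S j) ∪ F j)

/-!
Interim sets can be avoided altogether: averaging over residues modulo `f` gives a series that is no
worse and has a simple block structure. Write `τ = q * f + r` with `r < f`. Among the residues
`s < r` choose `c₁` maximizing `∑ i ≤ q, β (W (i * f + s))`, among the residues `r ≤ s < f` choose
`c₂` maximizing `∑ i < q, β (W (i * f + s))`, and replace in every period the first `r` committees
by the one at residue `c₁` and the other `f - r` by the one at residue `c₂`. This does not lower
the quality, and it samples `W` along a monotone `σ` with `σ (t + f) = σ t + f`, so the new series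
is again consecutive `f`-frequency.

Two committees of a consecutive `f`-frequency series at distance at least `f` are disjoint, hence
so are blocks `j` and `l` of the new series when `j + 2 ≤ l`. A candidate therefore occurs in one
block or in two adjacent ones, and sorting the candidates by the sum of the first and the last
block they occur in turns every block into an interval, later distinct blocks beginning further to
the right.
-/

open Finset

variable {R α ι : Type*} {m k f d τ : ℕ}

section Frequency

variable {W : Fin τ → Finset (Fin m)}

lemma consecutiveFrequency_iff :
    ConsecutiveFrequency f W ↔ (∀ c, {t | c ∈ W t}.OrdConnected) ∧
      ∀ a b : Fin τ, (a : ℕ) + f ≤ b → Disjoint (W a) (W b) := by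
  refine ⟨fun hW => ⟨fun c => ⟨fun a ha b hb x hx => (hW c).2 a b x ha hb hx.1 hx.2⟩, ?_⟩,
    fun ⟨hconn, hdisj⟩ c => ⟨?_, fun a b x ha hb hax hxb => (hconn c).out ha hb ⟨hax, hxb⟩⟩⟩
  · intro a b hab
    rw [Finset.disjoint_left]
    intro c ha hb
    have hsub : Icc a b ⊆ ({t | c ∈ W t} : Finset (Fin τ)) := fun x hx => by
      rw [mem_Icc] at hx
      simpa using (hW c).2 a b x ha hb hx.1 hx.2
    have hcard := (card_le_card hsub).trans (hW c).1
    rw [Fin.card_Icc] at hcard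
    omega
  · rcases ({t | c ∈ W t} : Finset (Fin τ)).eq_empty_or_nonempty with hempty | hne
    · simp [hempty]
    obtain ⟨a, ha, hmin⟩ := exists_min_image _ id hne
    have hsub : ({t | c ∈ W t} : Finset (Fin τ)).map Fin.valEmbedding ⊆ Ico (a : ℕ) (a + f) := by
      intro n hn
      obtain ⟨t, ht, rfl⟩ := mem_map.mp hn
      refine mem_Ico.mpr ⟨hmin t ht, not_le.mp fun hat => ?_⟩
      exact Finset.disjoint_left.mp (hdisj a t hat) (mem_filter.mp ha).2 (mem_filter.mp ht).2
    simpa using card_le_card hsub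

lemma ConsecutiveFrequency.comp {n : ℕ} {σ : Fin n → Fin τ} (hW : ConsecutiveFrequency f W)
    (hσ : Monotone σ) (hσf : ∀ a b : Fin n, (a : ℕ) + f ≤ b → (σ a : ℕ) + f ≤ σ b) :
    ConsecutiveFrequency f (W ∘ σ) := by
  rw [consecutiveFrequency_iff] at hW ⊢
  exact ⟨fun c => (hW.1 c).preimage_mono hσ, fun a b hab => hW.2 _ _ (hσf a b hab)⟩

end Frequency

section Sampling

/-- Cut every period of `f` consecutive times into its first `r` times and the remaining ones, and
number the resulting blocks consecutively: `blockIndex f r t` is the number of the block of the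
time `t`, which is even on first parts and odd on second parts. -/
def blockIndex (f r t : ℕ) : ℕ := 2 * (t / f) + if t % f < r then 0 else 1

/-- The time that represents block `j`, namely the one at offset `c₁` (for even `j`) or `c₂` (for
odd `j`) in the period of that block. -/
def sampleTime (f c₁ c₂ j : ℕ) : ℕ := j / 2 * f + if j % 2 = 0 then c₁ else c₂

lemma blockIndex_add_right (hf : 0 < f) (r t : ℕ) :
    blockIndex f r (t + f) = blockIndex f r t + 2 := by
  simp only [blockIndex, Nat.add_div_right t hf, Nat.add_mod_right]
  ring

lemma blockIndex_monotone (f r : ℕ) : Monotone (blockIndex f r) := by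
  intro s t hst
  have hs := Nat.div_add_mod s f
  have ht := Nat.div_add_mod t f
  simp only [blockIndex]
  rcases (Nat.div_le_div_right hst : s / f ≤ t / f).lt_or_eq with hlt | heq
  · split_ifs <;> omega
  · rw [heq] at hs ⊢
    split_ifs <;> omega

lemma sampleTime_add_two (f c₁ c₂ j : ℕ) :
    sampleTime f c₁ c₂ (j + 2) = sampleTime f c₁ c₂ j + f := by
  simp only [sampleTime, Nat.add_div_right j two_pos, Nat.add_mod_right]
  ring

lemma sampleTime_two_mul (f c₁ c₂ i : ℕ) : sampleTime f c₁ c₂ (2 * i) = i * f + c₁ := by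
  simp [sampleTime]

lemma sampleTime_two_mul_add_one (f c₁ c₂ i : ℕ) :
    sampleTime f c₁ c₂ (2 * i + 1) = i * f + c₂ := by
  simp [sampleTime, Nat.mul_add_div]

lemma sampleTime_monotone {c₁ c₂ : ℕ} (h₁₂ : c₁ ≤ c₂) (h₂₁ : c₂ ≤ c₁ + f) :
    Monotone (sampleTime f c₁ c₂) := by
  refine monotone_nat_of_le_succ fun j => ?_
  rcases Nat.even_or_odd' j with ⟨i, rfl | rfl⟩
  · rw [sampleTime_two_mul, sampleTime_two_mul_add_one]
    omega
  · rw [sampleTime_two_mul_add_one, sampleTime_add_two, sampleTime_two_mul]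
    omega

lemma sampleTime_blockIndex (f r c₁ c₂ t : ℕ) :
    sampleTime f c₁ c₂ (blockIndex f r t) = t / f * f + if t % f < r then c₁ else c₂ := by
  unfold blockIndex
  split_ifs
  · exact sampleTime_two_mul f c₁ c₂ _
  · exact sampleTime_two_mul_add_one f c₁ c₂ _

lemma sampleTime_blockIndex_mul_add {s : ℕ} (hs : s < f) (r c₁ c₂ i : ℕ) :
    sampleTime f c₁ c₂ (blockIndex f r (i * f + s)) = i * f + if s < r then c₁ else c₂ := by
  rw [sampleTime_blockIndex, Nat.mul_add_mod', Nat.mod_eq_of_lt hs, mul_comm i f,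
    Nat.mul_add_div (by omega), Nat.div_eq_of_lt hs, add_zero, mul_comm f i]

lemma sampleTime_blockIndex_lt {c₁ c₂ t : ℕ} (hc₁ : ∀ s < τ % f, c₁ < τ % f) (hc₂ : c₂ < f)
    (ht : t < τ) : sampleTime f c₁ c₂ (blockIndex f (τ % f) t) < τ := by
  have hτ := Nat.div_add_mod' τ f
  have ht' := Nat.div_add_mod' t f
  have hdiv : t / f ≤ τ / f := Nat.div_le_div_right ht.le
  rw [sampleTime_blockIndex]
  split_ifs with hs
  · have := hc₁ _ hs
    have := Nat.mul_le_mul_right f hdiv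
    omega
  · have hlt : t / f < τ / f := hdiv.lt_of_ne fun heq => by rw [heq] at ht'; omega
    have := Nat.mul_le_mul_right f (Nat.succ_le_of_lt hlt)
    rw [Nat.succ_mul] at this
    omega

lemma sum_range_mul [AddCommMonoid R] (v : ℕ → R) (q f : ℕ) :
    ∑ n ∈ range (q * f), v n = ∑ s ∈ range f, ∑ i ∈ range q, v (i * f + s) := by
  rw [sum_comm]
  induction q with
  | zero => simp
  | succ q ih => rw [Nat.succ_mul, sum_range_add, ih, sum_range_succ]

lemma sum_range_mul_add [AddCommMonoid R] (v : ℕ → R) (q : ℕ) {f r : ℕ} (hr : r ≤ f) :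
    ∑ n ∈ range (q * f + r), v n =
      ∑ s ∈ range r, ∑ i ∈ range (q + 1), v (i * f + s) +
      ∑ s ∈ Ico r f, ∑ i ∈ range q, v (i * f + s) := by
  rw [sum_range_add, sum_range_mul, ← sum_range_add_sum_Ico _ hr]
  simp only [sum_range_succ, sum_add_distrib]
  abel

lemma exists_mem_Icc_forall_le [LinearOrder R] (A : ℕ → R) {a b : ℕ} (hab : a ≤ b) :
    ∃ c ∈ Icc a b, ∀ s ∈ Ico a b, c < b ∧ A s ≤ A c := by
  rcases hab.eq_or_lt with rfl | hlt
  · exact ⟨a, by simp⟩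
  · obtain ⟨c, hc, hmax⟩ := exists_max_image (Ico a b) A ⟨a, by simp [hlt]⟩
    exact ⟨c, Ico_subset_Icc_self hc, fun s hs => ⟨(mem_Ico.mp hc).2, hmax s hs⟩⟩

lemma exists_sum_range_le_sum_sampleTime [AddCommMonoid R] [LinearOrder R] [IsOrderedAddMonoid R]
    (v : ℕ → R) (hf : 0 < f) (τ : ℕ) :
    ∃ c₁ c₂, c₁ ≤ c₂ ∧ c₂ < f ∧
      (∀ t < τ, sampleTime f c₁ c₂ (blockIndex f (τ % f) t) < τ) ∧
      ∑ t ∈ range τ, v t ≤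
        ∑ t ∈ range τ, v (sampleTime f c₁ c₂ (blockIndex f (τ % f) t)) := by
  have hr : τ % f < f := Nat.mod_lt τ hf
  obtain ⟨c₁, hc₁, hmax₁⟩ := exists_mem_Icc_forall_le
    (fun s => ∑ i ∈ range (τ / f + 1), v (i * f + s)) (Nat.zero_le (τ % f))
  obtain ⟨c₂, hc₂, hmax₂⟩ := exists_mem_Icc_forall_le
    (fun s => ∑ i ∈ range (τ / f), v (i * f + s)) hr.le
  rw [mem_Icc] at hc₁ hc₂
  have hc₂f : c₂ < f := (hmax₂ (τ % f) (by simp [hr])).1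
  refine ⟨c₁, c₂, hc₁.2.trans hc₂.1, hc₂f,
    fun t => sampleTime_blockIndex_lt (fun s hs => (hmax₁ s (by simp [hs])).1) hc₂f, ?_⟩
  have hsplit := fun v : ℕ → R => sum_range_mul_add v (τ / f) hr.le
  simp only [Nat.div_add_mod'] at hsplit
  rw [hsplit, hsplit]
  refine add_le_add (sum_le_sum fun s hs => ?_) (sum_le_sum fun s hs => ?_)
  · rw [mem_range] at hs
    simpa only [sampleTime_blockIndex_mul_add (hs.trans hr), if_pos hs]
      using (hmax₁ s (by simp [hs])).2
  · have hs' := mem_Ico.mp hs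
    simpa only [sampleTime_blockIndex_mul_add hs'.2, if_neg hs'.1.not_gt] using (hmax₂ s hs).2

lemma ConsecutiveFrequency.exists_sum_le_sum_comp [AddCommMonoid R] [LinearOrder R]
    [IsOrderedAddMonoid R] {W : Fin τ → Finset (Fin m)} (hW : ConsecutiveFrequency f W)
    (hf : 0 < f) (β : Finset (Fin m) → R) :
    ∃ (σ : Fin τ → Fin τ) (J : Fin τ → ℕ), ConsecutiveFrequency f (W ∘ σ) ∧ Monotone J ∧
      (∀ s t, J s = J t → σ s = σ t) ∧
      (∀ s t, J s + 2 ≤ J t → Disjoint (W (σ s)) (W (σ t))) ∧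
      ∑ t, β (W t) ≤ ∑ t, β (W (σ t)) := by
  set v : ℕ → R := fun n => if h : n < τ then β (W ⟨n, h⟩) else 0 with hv
  have hvW (t : Fin τ) : v t = β (W t) := by simp [hv]
  obtain ⟨c₁, c₂, hc₁₂, hc₂, hlt, hsum⟩ := exists_sum_range_le_sum_sampleTime v hf τ
  have hmono : Monotone (sampleTime f c₁ c₂) := sampleTime_monotone hc₁₂ (by omega)
  set J : Fin τ → ℕ := fun t => blockIndex f (τ % f) t
  have hJ : Monotone J := fun s t hst => blockIndex_monotone f _ hst
  set σ : Fin τ → Fin τ := fun t => ⟨sampleTime f c₁ c₂ (J t), hlt t t.2⟩ with hσ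
  have hσJ (s t : Fin τ) (hst : J s + 2 ≤ J t) : (σ s : ℕ) + f ≤ σ t := by
    simpa only [hσ, ← sampleTime_add_two] using hmono hst
  refine ⟨σ, J, hW.comp (fun s t hst => hmono (hJ hst)) fun s t hst => hσJ s t ?_, hJ,
    fun s t hst => by simp only [hσ, hst],
    fun s t hst => (consecutiveFrequency_iff.mp hW).2 _ _ (hσJ s t hst), ?_⟩
  · simpa only [J, ← blockIndex_add_right hf] using blockIndex_monotone f _ hst
  · simp only [← hvW]
    simpa only [← Fin.sum_univ_eq_sum_range] using hsum

end Sampling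

section Windows

/-- Candidates of a single block `j` get the key `2 * j + 2`, those of blocks `j` and `j + 1` the
key `2 * j + 3`, and unused candidates the key `0`. -/
lemma exists_key_mem_iff_mem_Icc {V : ι → Finset α} {J : ι → ℕ}
    (heq : ∀ s t, J s = J t → V s = V t) (hdisj : ∀ s t, J s + 2 ≤ J t → Disjoint (V s) (V t)) :
    ∃ g : α → ℕ, ∀ t c, c ∈ V t ↔ g c ∈ Set.Icc (2 * J t + 1) (2 * J t + 3) := by
  suffices h : ∀ c, ∃ n, ∀ t, c ∈ V t ↔ n ∈ Set.Icc (2 * J t + 1) (2 * J t + 3) by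
    choose g hg using h
    exact ⟨g, fun t c => hg c t⟩
  intro c
  by_cases hc : ∃ t, c ∈ V t
  · obtain ⟨a, ha, hmin⟩ := exists_minimalFor_of_wellFoundedLT (fun t => c ∈ V t) J hc
    have hle (t) (ht : c ∈ V t) : J a ≤ J t ∧ J t ≤ J a + 1 := by
      refine ⟨(le_total (J a) (J t)).elim id (hmin ht), not_lt.mp fun hat => ?_⟩
      exact Finset.disjoint_left.mp (hdisj a t hat) ha ht
    by_cases hb : ∃ b, c ∈ V b ∧ J b = J a + 1
    · obtain ⟨b, hb, hab⟩ := hb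
      refine ⟨2 * J a + 3, fun t => ⟨fun ht => ?_, fun ⟨h₁, h₂⟩ => ?_⟩⟩
      · have := hle t ht
        constructor <;> omega
      · rcases (by omega : J t = J a ∨ J t = J b) with h | h
        · rwa [heq t a h]
        · rwa [heq t b h]
    · refine ⟨2 * J a + 2, fun t => ⟨fun ht => ?_, fun ⟨h₁, h₂⟩ => ?_⟩⟩
      · have := hle t ht
        have : J t ≠ J a + 1 := fun h => hb ⟨t, ht, h⟩
        constructor <;> omega
      · rwa [heq t a (by omega)]
  · exact ⟨0, fun t => iff_of_false (fun ht => hc ⟨t, ht⟩) (by simp)⟩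

lemma begOf_le {ρ : Equiv.Perm (Fin m)} {X : Finset (Fin m)} {a : Fin m} (ha : ρ a ∈ X) :
    begOf ρ X ≤ a :=
  Nat.sInf_le ⟨a.2, ha⟩

lemma exists_eq_begOf (ρ : Equiv.Perm (Fin m)) {X : Finset (Fin m)} (hX : X.Nonempty) :
    ∃ a : Fin m, (a : ℕ) = begOf ρ X ∧ ρ a ∈ X := by
  obtain ⟨c, hc⟩ := hX
  have hne : {j : ℕ | ∃ h : j < m, ρ ⟨j, h⟩ ∈ X}.Nonempty := ⟨ρ.symm c, (ρ.symm c).2, by simpa⟩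
  obtain ⟨h, hmem⟩ := Nat.sInf_mem hne
  exact ⟨⟨_, h⟩, rfl, hmem⟩

lemma begOf_lt_begOf {ρ : Equiv.Perm (Fin m)} {X Y : Finset (Fin m)} (hY : Y.Nonempty)
    {x : Fin m} (hx : ρ x ∈ X) (hxY : ∀ y, ρ y ∈ Y → x < y) : begOf ρ X < begOf ρ Y := by
  obtain ⟨a, ha, haY⟩ := exists_eq_begOf ρ hY
  rw [← ha]
  exact (begOf_le hx).trans_lt (hxY a haY)

lemma exists_perm_isRhoInterval [LinearOrder α] [Preorder ι] {V : ι → Finset (Fin m)}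
    (hcard : ∀ t, #(V t) = k) {g : Fin m → α} {lo hi : ι → α} (hhi : Monotone hi)
    (hV : ∀ t c, c ∈ V t ↔ g c ∈ Set.Icc (lo t) (hi t)) :
    ∃ ρ : Equiv.Perm (Fin m), (∀ t, IsRhoInterval ρ (V t)) ∧
      ∀ s t, s ≤ t → V s = V t ∨ begOf ρ (V s) < begOf ρ (V t) := by
  set ρ : Equiv.Perm (Fin m) := Tuple.sort g
  have hρ : Monotone (g ∘ ρ) := Tuple.monotone_sort g
  refine ⟨ρ, fun t a b x ha hb hax hxb => ?_, fun s t hst => or_iff_not_imp_left.mpr fun hne => ?_⟩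
  · rw [hV] at ha hb ⊢
    exact ⟨ha.1.trans (hρ hax), (hρ hxb).trans hb.2⟩
  · have hcard_eq : #(V s) = #(V t) := (hcard s).trans (hcard t).symm
    obtain ⟨x, hxs, hxt⟩ := not_subset.mp fun h => hne (eq_of_subset_of_card_le h hcard_eq.ge)
    have hVt : (V t).Nonempty := card_pos.mp (hcard_eq ▸ card_pos.mpr ⟨x, hxs⟩)
    obtain ⟨x, rfl⟩ := ρ.surjective x
    refine begOf_lt_begOf hVt hxs fun y hy => not_le.mp fun hyx => hxt ?_
    rw [hV] at hxs hy ⊢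
    exact ⟨hy.1.trans (hρ hyx), hxs.2.trans (hhi hst)⟩

end Windows

section Division

lemma isDivision_of_strictMono_begOf {ρ : Equiv.Perm (Fin m)} {S : Fin d → Finset (Fin m)}
    (hS : ∀ i, #(S i) = k ∧ IsRhoInterval ρ (S i)) (hbeg : StrictMono fun i => begOf ρ (S i)) :
    IsDivision k d ρ S fun _ => ∅ :=
  ⟨hS, fun i _ => hbeg (Fin.lt_def.mpr (Nat.lt_succ_self i)), by simp⟩

lemma lt_card_filter_iff_of_antitone {P : Fin τ → Prop} [DecidablePred P] (hP : Antitone P)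
    (t : Fin τ) : (t : ℕ) < #{s | P s} ↔ P t := by
  refine ⟨fun hlt => by_contra fun ht => hlt.not_ge ?_, fun ht => ?_⟩
  · have hsub : ({s | P s} : Finset (Fin τ)) ⊆ Iio t := fun s hs =>
      mem_Iio.mpr (not_le.mp fun hts => ht (hP hts (mem_filter.mp hs).2))
    simpa only [Fin.card_Iio] using card_le_card hsub
  · have hsub : Iic t ⊆ ({s | P s} : Finset (Fin τ)) := fun s hs =>
      mem_filter.mpr ⟨mem_univ s, hP (mem_Iic.mp hs) ht⟩
    simpa only [Fin.card_Iic, Nat.lt_iff_add_one_le] using card_le_card hsub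

lemma inducedSeries_comp_of_monotone {p : Fin τ → Fin d} (hp : Monotone p)
    (S F : Fin d → Finset (Fin m)) :
    InducedSeries S F (fun i => #{t | p t = i}) 0 (S ∘ p) := by
  intro t j
  have hlt : ∑ i with i < j, (#{t | p t = i} + 0) = #{t | p t < j} := by
    simp [sum_card_fiberwise_eq_card_filter]
  have hle : #{t | p t < j} + #{t | p t = j} = #{t | p t ≤ j} := by
    rw [← card_union_of_disjoint (disjoint_filter.mpr fun _ _ h => h.ne), ← filter_or]
    simp only [le_iff_lt_or_eq]
  have hlt_iff : (t : ℕ) < #{s | p s < j} ↔ p t < j :=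
    lt_card_filter_iff_of_antitone (fun _ _ hab => (hp hab).trans_lt) t
  have hle_iff : (t : ℕ) < #{s | p s ≤ j} ↔ p t ≤ j :=
    lt_card_filter_iff_of_antitone (fun _ _ hab => (hp hab).trans) t
  simp only [Pi.zero_apply, add_zero] at hlt ⊢
  rw [hlt, hle]
  refine ⟨fun ⟨h₁, h₂⟩ => ?_, fun ⟨h₁, h₂⟩ => absurd h₂ h₁.not_gt⟩
  exact congrArg S ((hle_iff.mp h₂).antisymm (not_lt.mp (mt hlt_iff.mpr h₁.not_gt)))

lemma exists_fin_factorization_of_monotone [Finite ι] [Preorder ι] [LinearOrder α] {b : ι → α}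
    (hb : Monotone b) :
    ∃ (d : ℕ) (p : ι → Fin d) (e : Fin d → α),
      Monotone p ∧ p.Surjective ∧ StrictMono e ∧ ∀ t, e (p t) = b t := by
  have := Fintype.ofFinite ι
  set e := (univ.image b).orderIsoOfFin rfl
  have hmem (t : ι) : b t ∈ univ.image b := mem_image_of_mem b (mem_univ t)
  refine ⟨_, fun t => e.symm ⟨b t, hmem t⟩, fun i => e i, fun s t hst => e.symm.monotone (hb hst),
    fun i => ?_, e.strictMono, fun t => by simp⟩
  obtain ⟨t, -, ht⟩ := mem_image.mp (e i).2
  exact ⟨t, by simp [ht]⟩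

lemma exists_isDivision_inducedSeries (hτ : 0 < τ) {V : Fin τ → Finset (Fin m)}
    (hcard : ∀ t, #(V t) = k) {ρ : Equiv.Perm (Fin m)} (hint : ∀ t, IsRhoInterval ρ (V t))
    (hbeg : ∀ s t, s ≤ t → V s = V t ∨ begOf ρ (V s) < begOf ρ (V t)) :
    ∃ d, 1 ≤ d ∧ ∃ (S : Fin d → Finset (Fin m)) (r : Fin d → ℕ),
      IsDivision k d ρ S (fun _ => ∅) ∧ (∀ i, 1 ≤ r i) ∧ ∑ i, r i = τ ∧
      InducedSeries S (fun _ => ∅) r 0 V := by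
  have hmono : Monotone fun t => begOf ρ (V t) := fun s t hst =>
    (hbeg s t hst).elim (fun h => (congrArg (begOf ρ) h).le) le_of_lt
  have hinj (s t : Fin τ) (hst : begOf ρ (V s) = begOf ρ (V t)) : V s = V t :=
    (le_total s t).elim (fun h => (hbeg s t h).resolve_right hst.not_lt)
      fun h => ((hbeg t s h).resolve_right hst.not_gt).symm
  obtain ⟨d, p, e, hp, hpsurj, he, hep⟩ := exists_fin_factorization_of_monotone hmono
  choose T hT using hpsurj
  have hV : (fun i => V (T i)) ∘ p = V := funext fun t => hinj _ t (by rw [← hep, hT, hep])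
  refine ⟨d, (Nat.zero_le _).trans_lt (p ⟨0, hτ⟩).2, fun i => V (T i), fun i => #{t | p t = i},
    isDivision_of_strictMono_begOf (fun i => ⟨hcard _, hint _⟩) fun i j hij => ?_,
    fun i => card_pos.mpr ⟨T i, by simp [hT]⟩, ?_, ?_⟩
  · simpa only [← hep, hT] using he hij
  · simpa using (card_eq_sum_card_fiberwise (f := p) (s := univ) (t := univ) (by simp)).symm
  · simpa only [hV] using inducedSeries_comp_of_monotone hp (fun i => V (T i)) fun _ => ∅

end Division

theorem division_space_general [AddCommMonoid R] [LinearOrder R] [IsOrderedAddMonoid R]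
    (hf : 1 ≤ f) (hτ : 1 ≤ τ) (β : Finset (Fin m) → R) (W : Fin τ → Finset (Fin m))
    (hWfreq : ConsecutiveFrequency f W) (hWcard : ∀ i, #(W i) = k) :
    ∃ d, 1 ≤ d ∧
      ∃ (ρ : Equiv.Perm (Fin m)) (S : Fin d → Finset (Fin m)) (r : Fin d → ℕ)
        (W' : Fin τ → Finset (Fin m)),
        IsDivision k d ρ S (fun _ => ∅) ∧
        (∀ i, 1 ≤ r i) ∧
        ∑ i, r i = τ ∧
        InducedSeries S (fun _ => ∅) r 0 W' ∧
        ConsecutiveFrequency f W' ∧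
        (∀ i, #(W' i) = k) ∧
        ∑ i, β (W i) ≤ ∑ i, β (W' i) := by
  obtain ⟨σ, J, hfreq, hJ, heq, hdisj, hsum⟩ := hWfreq.exists_sum_le_sum_comp hf β
  have hcard : ∀ t, #((W ∘ σ) t) = k := fun t => hWcard (σ t)
  obtain ⟨g, hg⟩ := exists_key_mem_iff_mem_Icc (V := W ∘ σ)
    (fun s t hst => congrArg W (heq s t hst)) hdisj
  obtain ⟨ρ, hint, hbeg⟩ := exists_perm_isRhoInterval hcard ((hJ.const_mul' 2).add_const 3) hg
  obtain ⟨d, hd, S, r, hdiv, hr, hrsum, hind⟩ := exists_isDivision_inducedSeries hτ hcard hint hbeg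
  exact ⟨d, hd, ρ, S, r, W ∘ σ, hdiv, hr, hrsum, hind, hfreq, hcard, hsum⟩

/-- For every consecutive `f`-frequency committee series there is a division whose space
contains a series of at least the same utilitarian quality; in particular, some
division's space contains an optimal series. -/
theorem division_space {m k f τ : ℕ} (hk : 1 ≤ k) (hf : 1 ≤ f) (hτ : 1 ≤ τ)
    (β : Finset (Fin m) → ℕ)
    (W : Fin τ → Finset (Fin m))
    (hWfreq : ConsecutiveFrequency f W) (hWcard : ∀ i, (W i).card = k) :
    ∃ (d : ℕ), 1 ≤ d ∧
      ∃ (ρ : Equiv.Perm (Fin m)) (S F : Fin d → Finset (Fin m))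
        (r u : Fin d → ℕ) (W' : Fin τ → Finset (Fin m)),
        IsDivision k d ρ S F ∧
        (∀ i, 1 ≤ r i) ∧
        (∀ i, F i = ∅ → u i = 0) ∧
        (∑ i, (r i + u i)) = τ ∧
        InducedSeries S F r u W' ∧
        ConsecutiveFrequency f W' ∧
        (∀ i, (W' i).card = k) ∧
        (∑ i, β (W i)) ≤ ∑ i, β (W' i) := by
  obtain ⟨d, hd, ρ, S, r, W', hdiv, hr, hrsum, h⟩ := division_space_general hf hτ β W hWfreq hWcard
  exact ⟨d, hd, ρ, S, fun _ => ∅, r, 0, W', hdiv, hr, by simp, by simpa using hrsum, h⟩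
end

section
/- (Reverse correctness claim for the polynomial-multiplication algorithm, utilitarian case.) Fix m, k ≥ 1 and a committee scoring function β : Finset (Fin m) → ℕ, and let p[s,j,ℓ] be the recursively defined polynomials described in the context. Then for all j ≥ 1 and ℓ : ℕ: if S : Fin j → Finset (Fin m) is a family of pairwise disjoint committees, each of cardinality k, with ∑ i, β (S i) ≥ ℓ, and s denotes the cardinality of ⋃ i, S i (so s = k * j), then the exponent χ(⋃ i, S i) lies in the support of p[s,j,ℓ]; in particular p[s,j,ℓ] ≠ 0. -/
open Polynomial

/-- The characteristic-vector encoding of a set of candidates. -/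
def chi {m : ℕ} (Y : Finset (Fin m)) : ℕ := ∑ i ∈ Y, 2 ^ (i : ℕ)

/-- The Hamming weight of a natural number: the number of ones in its binary
representation. -/
def hammingWeight (e : ℕ) : ℕ := (Nat.digits 2 e).sum

/-- The Hamming projection of a polynomial to `s`: keep exactly the monomials whose
exponent has Hamming weight `s`. -/
noncomputable def hammingProj (s : ℕ) (p : Polynomial ℕ) : Polynomial ℕ :=
  ∑ e ∈ p.support.filter (fun e => hammingWeight e = s), C (p.coeff e) * X ^ e

/-- The representative polynomial: change all nonzero coefficients to `1`. -/
noncomputable def reprPoly (p : Polynomial ℕ) : Polynomial ℕ :=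
  ∑ e ∈ p.support, (X : Polynomial ℕ) ^ e

/-- The recursively defined polynomials `p[s,j,ℓ]` of the polynomial-multiplication
algorithm (utilitarian case), with the number `j` of committees as first argument. -/
noncomputable def polyP (m k : ℕ) (β : Finset (Fin m) → ℕ) :
    ℕ → ℕ → ℕ → Polynomial ℕ
  | 0, _, _ => 0
  | 1, s, ℓ =>
      if s = k then
        ∑ Y ∈ Finset.univ.filter (fun Y : Finset (Fin m) => Y.card = k ∧ ℓ ≤ β Y),
          (X : Polynomial ℕ) ^ chi Y
      else 0
  | (j + 2), s, ℓ =>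
      reprPoly (hammingProj s
        (∑ Y ∈ Finset.univ.filter (fun Y : Finset (Fin m) => Y.card = k),
          (X : Polynomial ℕ) ^ chi Y * polyP m k β (j + 1) (s - k) (ℓ - β Y)))

/-!
The committees of the family are added one at a time, by induction on the index set. If `Y` is
disjoint from the union `U` of the committees already added, then `χ (Y ∪ U) = χ Y + χ U`, so
`X ^ χ Y` times the monomial of `U` is the monomial of `Y ∪ U`. This monomial cannot cancel in the
sum over all `Y`, because the coefficients are natural numbers. It survives the Hamming projection
to `|Y ∪ U|`, because the binary representation of `χ Z` has exactly `|Z|` ones.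
-/

theorem hammingWeight_two_mul (n : ℕ) : hammingWeight (2 * n) = hammingWeight n := by
  rcases n.eq_zero_or_pos with rfl | hn
  · rfl
  · simp [hammingWeight, Nat.digits_base_mul one_lt_two hn]

theorem hammingWeight_two_mul_add_one (n : ℕ) :
    hammingWeight (2 * n + 1) = hammingWeight n + 1 := by
  have digits_eq : Nat.digits 2 (2 * n + 1) = 1 :: Nat.digits 2 n := by
    rw [add_comm, Nat.digits_add 2 one_lt_two 1 n one_lt_two (.inl one_ne_zero)]
  rw [hammingWeight, digits_eq, List.sum_cons, add_comm, hammingWeight]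

theorem hammingWeight_eq_length_bitIndices (n : ℕ) : hammingWeight n = n.bitIndices.length := by
  induction n using Nat.evenOddRec with
  | h0 => simp [hammingWeight]
  | h_even n ih => rw [hammingWeight_two_mul, ih, Nat.bitIndices_two_mul, List.length_map]
  | h_odd n ih =>
    rw [hammingWeight_two_mul_add_one, ih, Nat.bitIndices_two_mul_add_one, List.length_cons,
      List.length_map]

theorem hammingWeight_sum_two_pow (A : Finset ℕ) : hammingWeight (∑ i ∈ A, 2 ^ i) = A.card := by
  rw [hammingWeight_eq_length_bitIndices, ← List.toFinset_card_of_nodup Nat.bitIndices_nodup,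
    Finset.toFinset_bitIndices_sum_two_pow]

section Chi

variable {m : ℕ}

theorem hammingWeight_chi (Y : Finset (Fin m)) : hammingWeight (chi Y) = Y.card := by
  have chi_eq : chi Y = ∑ i ∈ Y.map Fin.valEmbedding, 2 ^ i :=
    (Finset.sum_map Y Fin.valEmbedding fun i => 2 ^ i).symm
  rw [chi_eq, hammingWeight_sum_two_pow, Finset.card_map]

theorem chi_union {Y Z : Finset (Fin m)} (h : Disjoint Y Z) : chi (Y ∪ Z) = chi Y + chi Z :=
  Finset.sum_union h

end Chi

theorem mem_support_sum_iff {ι R : Type*} [Semiring R] [PartialOrder R]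
    [CanonicallyOrderedAdd R] {T : Finset ι} {f : ι → R[X]} {e : ℕ} :
    e ∈ (∑ i ∈ T, f i).support ↔ ∃ i ∈ T, e ∈ (f i).support := by
  simp only [mem_support_iff, finsetSum_coeff, ne_eq, Finset.sum_eq_zero_iff, not_forall,
    exists_prop]

theorem mem_support_X_pow_mul_iff {R : Type*} [Semiring R] {p : R[X]} {n e : ℕ} :
    e ∈ (X ^ n * p).support ↔ ∃ d ∈ p.support, n + d = e := by
  rw [mem_support_iff, coeff_X_pow_mul']
  constructor
  · intro h
    obtain ⟨hn, hd⟩ := ite_ne_right_iff.mp h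
    exact ⟨e - n, mem_support_iff.mpr hd, Nat.add_sub_cancel' hn⟩
  · rintro ⟨d, hd, rfl⟩
    simpa using hd

theorem support_hammingProj (s : ℕ) (p : ℕ[X]) :
    (hammingProj s p).support = p.support.filter (hammingWeight · = s) := by
  ext e
  simp +contextual [hammingProj, coeff_X_pow]

theorem support_reprPoly (p : ℕ[X]) : (reprPoly p).support = p.support := by
  ext e
  simp [reprPoly, coeff_X_pow]

section PolyP

variable {m k : ℕ} {β : Finset (Fin m) → ℕ}

theorem mem_support_polyP_one_iff {ℓ e : ℕ} :
    e ∈ (polyP m k β 1 k ℓ).support ↔ ∃ Y, Y.card = k ∧ ℓ ≤ β Y ∧ chi Y = e := by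
  rw [polyP, if_pos rfl, mem_support_sum_iff]
  simp [and_assoc, eq_comm]

theorem mem_support_polyP_succ_iff {j s ℓ e : ℕ} (hj : j ≠ 0) :
    e ∈ (polyP m k β (j + 1) s ℓ).support ↔
      hammingWeight e = s ∧ ∃ Y, Y.card = k ∧
        ∃ d ∈ (polyP m k β j (s - k) (ℓ - β Y)).support, chi Y + d = e := by
  obtain ⟨i, rfl⟩ := Nat.exists_eq_succ_of_ne_zero hj
  rw [polyP, support_reprPoly, support_hammingProj, Finset.mem_filter, and_comm,
    mem_support_sum_iff]
  simp only [Finset.mem_filter_univ, mem_support_X_pow_mul_iff]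

theorem chi_union_mem_support_polyP_succ {j ℓ : ℕ} (hj : j ≠ 0) {Y U : Finset (Fin m)}
    (hY : Y.card = k) (hYU : Disjoint Y U)
    (hU : chi U ∈ (polyP m k β j U.card (ℓ - β Y)).support) :
    chi (Y ∪ U) ∈ (polyP m k β (j + 1) (Y ∪ U).card ℓ).support := by
  have hcard : (Y ∪ U).card - k = U.card := by
    rw [Finset.card_union_of_disjoint hYU, hY, Nat.add_sub_cancel_left]
  refine (mem_support_polyP_succ_iff hj).mpr
    ⟨hammingWeight_chi _, Y, hY, chi U, ?_, (chi_union hYU).symm⟩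
  rwa [hcard]

theorem chi_biUnion_mem_support_polyP {ι : Type*} {T : Finset ι} (hT : T.Nonempty)
    {S : ι → Finset (Fin m)} (hdisj : (T : Set ι).PairwiseDisjoint S)
    (hcard : ∀ i ∈ T, (S i).card = k) {ℓ : ℕ} (hscore : ℓ ≤ ∑ i ∈ T, β (S i)) :
    chi (T.biUnion S) ∈ (polyP m k β T.card (T.biUnion S).card ℓ).support := by
  classical
  induction hT using Finset.Nonempty.cons_induction generalizing ℓ with
  | singleton a =>
    have ha : (S a).card = k := hcard a (Finset.mem_singleton_self a)
    rw [Finset.sum_singleton] at hscore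
    rw [Finset.singleton_biUnion, Finset.card_singleton, ha]
    exact mem_support_polyP_one_iff.mpr ⟨S a, ha, hscore, rfl⟩
  | cons a T ha hT ih =>
    rw [Finset.coe_cons, Set.pairwiseDisjoint_insert_of_notMem (mod_cast ha)] at hdisj
    rw [Finset.forall_mem_cons] at hcard
    rw [Finset.sum_cons] at hscore
    have hU : chi (T.biUnion S) ∈
        (polyP m k β T.card (T.biUnion S).card (ℓ - β (S a))).support :=
      ih hdisj.1 hcard.2 (Nat.sub_le_iff_le_add'.mpr hscore)
    rw [Finset.card_cons, Finset.cons_eq_insert, Finset.biUnion_insert]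
    exact chi_union_mem_support_polyP_succ hT.card_ne_zero hcard.1
      ((Finset.disjoint_biUnion_right _ _ _).mpr hdisj.2) hU

end PolyP

/-- Reverse correctness of the polynomial-multiplication algorithm (utilitarian case):
a family of `j` pairwise disjoint size-`k` committees of total score at least `ℓ`
contributes the monomial with exponent `χ` of its union to `p[s,j,ℓ]`, where `s` is
the cardinality of the union; in particular `p[s,j,ℓ] ≠ 0`. -/
theorem polyP_reverse {m k : ℕ} (hm : 1 ≤ m) (hk : 1 ≤ k) (β : Finset (Fin m) → ℕ)
    (j ℓ : ℕ) (hj : 1 ≤ j)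
    (S : Fin j → Finset (Fin m))
    (hdisj : ∀ a b : Fin j, a ≠ b → S a ∩ S b = ∅)
    (hcard : ∀ i, (S i).card = k)
    (hscore : ℓ ≤ ∑ i, β (S i))
    (s : ℕ) (hs : s = (Finset.univ.biUnion S).card) :
    chi (Finset.univ.biUnion S) ∈ (polyP m k β j s ℓ).support ∧
      polyP m k β j s ℓ ≠ 0 := by
  subst hs
  have : Nonempty (Fin j) := Fin.pos_iff_nonempty.mp hj
  have hS : ((Finset.univ : Finset (Fin j)) : Set (Fin j)).PairwiseDisjoint S :=
    fun a _ b _ hab => Finset.disjoint_iff_inter_eq_empty.mpr (hdisj a b hab)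
  have hmem : chi (Finset.univ.biUnion S) ∈
      (polyP m k β j (Finset.univ.biUnion S).card ℓ).support := by
    simpa only [Finset.card_fin] using
      chi_biUnion_mem_support_polyP Finset.univ_nonempty hS (fun i _ => hcard i) hscore
  exact ⟨hmem, support_nonempty.mp ⟨_, hmem⟩⟩
end
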